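/- If G is a non-abelian finite group with tp(G) > 4/81, then G has derived length exactly 2, i.e. the commutator subgroup G' is nontrivial and abelian. -/

import Mathlib

/-!
The double coset `HgH` is a union of `k` left and of `k` right cosets of `H`, which all meet in
equally many elements, so `P_G(H)` is the product of `k! / k ^ k` over the double cosets. Hence
`tp(G) > 4 / 81` forces every non-normal subgroup to have index at most `16`, and a non-normal
`p`-subgroup `H` with `p` odd either is its own normalizer, of index `4`, or has a normalizer `N`
of index `2` with `(N : H) = 3`. If `H` is abelian, then so is `G'` in both cases: in the first, by
Burnside's transfer theorem `G'` lies in a normal complement of order `4`; in the second,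
`G' / (G' ∩ H)` is cyclic and `G' ∩ H` is central in `G'`.

Suppose now that `G'` is not abelian, and let `C` be its centralizer. Every cyclic subgroup of odd
prime power order is normal and hence centralizes `G'`, so `G / C` is a `2`-group. Let `yC` be a
central involution of `G / C`. Then `⟨y⟩` is not normal, since otherwise `y` would centralize `G'`,
and comparing `⟨y⟩` and `C` with `⟨y²⟩` gives `(G : C) ≤ (G : ⟨y⟩) ≤ 16`. The commutator subgroup
of a `2`-group of order at most `16` is cyclic, so `G'` is cyclic modulo its centre, a
contradiction.
-/

open scoped Pointwise Classical

/-- `T` is simultaneously a left transversal for `H` (each left coset `gH` contains exactly one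
element of `T`) and a right transversal for `K` (each right coset `Kg` contains exactly one
element of `T`). -/
def IsDoubleTransversal {G : Type*} [Group G] (H K : Subgroup G) (T : Set G) : Prop :=
  (∀ g : G, ∃! t : G, t ∈ T ∧ g⁻¹ * t ∈ H) ∧ (∀ g : G, ∃! t : G, t ∈ T ∧ t * g⁻¹ ∈ K)

/-- `|DT_G(H,K)|`: the number of common transversals for the pair `(H, K)`. -/
noncomputable def numDT {G : Type*} [Group G] (H K : Subgroup G) : ℕ :=
  Nat.card {T : Set G // IsDoubleTransversal H K T}

/-- `P_G(H,K) = |DT_G(H,K)| / |H| ^ (G:H)`, the common transversal probability. -/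
noncomputable def transProb {G : Type*} [Group G] (H K : Subgroup G) : ℚ :=
  (numDT H K : ℚ) / (Nat.card H : ℚ) ^ H.index

/-- `tp(G)`: the minimum of `P_G(H) = P_G(H,H)` over all subgroups `H ≤ G`. -/
noncomputable def tp (G : Type*) [Group G] [Finite G] : ℚ :=
  haveI : Finite (Subgroup G) :=
    Finite.of_injective (fun H : Subgroup G => (H : Set G)) SetLike.coe_injective
  haveI : Fintype (Subgroup G) := Fintype.ofFinite _
  Finset.univ.inf' Finset.univ_nonempty (fun H : Subgroup G => transProb H H)

open Function (Injective)
open MulAction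

/-! ### Injective sections -/

section InjectiveSection

variable {I B Ω : Type*} {A : I → Type*}

lemma card_injective_section [Finite I] [∀ i, Finite (A i)] [Finite B] (q : ∀ i, A i → B)
    (S : Set B) (m : ℕ) (hS : ∀ i a, q i a ∈ S) (hm : ∀ i, ∀ b ∈ S, Nat.card {a // q i a = b} = m) :
    Nat.card {s : ∀ i, A i // Injective fun i => q i (s i)} =
      (Nat.card S).descFactorial (Nat.card I) * m ^ Nat.card I := by
  have : Fintype I := Fintype.ofFinite I
  have : Fintype S := Fintype.ofFinite S
  let toEmb (s : {s : ∀ i, A i // Injective fun i => q i (s i)}) : I ↪ S :=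
    ⟨fun i => ⟨q i (s.1 i), hS _ _⟩, fun _ _ h => s.2 (congrArg Subtype.val h)⟩
  have card_fiber (j : I ↪ S) : Nat.card {s // toEmb s = j} = m ^ Nat.card I := by
    have mem_fiber {s} (h : toEmb s = j) (i : I) : q i (s.1 i) = j i :=
      congrArg Subtype.val (DFunLike.congr_fun h i)
    let e : {s // toEmb s = j} ≃ ∀ i, {a // q i a = j i} :=
      { toFun := fun s i => ⟨s.1.1 i, mem_fiber s.2 i⟩
        invFun := fun t => ⟨⟨fun i => (t i).1, fun i k h => j.injective <| Subtype.ext <|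
          (t i).2.symm.trans (h.trans (t k).2)⟩, by ext i; exact (t i).2⟩
        left_inv := fun _ => rfl
        right_inv := fun _ => rfl }
    rw [Nat.card_congr e, Nat.card_pi, Finset.prod_congr rfl fun i _ => hm i (j i) (j i).2,
      Finset.prod_const, Finset.card_univ, Nat.card_eq_fintype_card]
  rw [← Nat.card_congr (Equiv.sigmaFiberEquiv toEmb), Nat.card_sigma,
    Finset.sum_congr rfl fun j _ => card_fiber j, Finset.sum_const, Finset.card_univ,
    Fintype.card_embedding_eq, smul_eq_mul, Nat.card_eq_fintype_card, Nat.card_eq_fintype_card]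

lemma card_injective_section_eq_prod [Fintype Ω] (q : ∀ i, A i → B) (r : I → Ω)
    (hr : ∀ i j a b, q i a = q j b → r i = r j) :
    Nat.card {s : ∀ i, A i // Injective fun i => q i (s i)} =
      ∏ ω, Nat.card {s : ∀ i : {i // r i = ω}, A i //
        Injective fun i : {i // r i = ω} => q i (s i)} := by
  rw [← Nat.card_pi]
  refine Nat.card_congr
    { toFun := fun s ω => ⟨fun i => s.1 i, fun i j h => Subtype.ext (s.2 h)⟩
      invFun := fun t => ⟨fun i => (t (r i)).1 ⟨i, rfl⟩, fun i j h => ?_⟩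
      left_inv := fun s => rfl
      right_inv := fun t => ?_ }
  · have inj_fiber : ∀ ω (hi : r i = ω) (hj : r j = ω),
        q i ((t ω).1 ⟨i, hi⟩) = q j ((t ω).1 ⟨j, hj⟩) → i = j :=
      fun ω hi hj h => congrArg Subtype.val ((t ω).2 (a₁ := ⟨i, hi⟩) (a₂ := ⟨j, hj⟩) h)
    have hij : r i = r j := hr _ _ _ _ h
    have hi : ((t (r j)).1 ⟨i, hij⟩) = (t (r i)).1 ⟨i, rfl⟩ := by
      clear h
      generalize r j = ω at hij
      subst hij
      rfl
    exact inj_fiber (r j) hij rfl (hi ▸ h)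
  · funext ω
    ext ⟨i, rfl⟩
    rfl

end InjectiveSection

/-- `k! / k ^ k`, the factor contributed to `P_G(H)` by a double coset consisting of `k` left
cosets. -/
def dcFactor (k : ℕ) : ℚ := k.factorial / (k : ℚ) ^ k

lemma dcFactor_nonneg (k : ℕ) : 0 ≤ dcFactor k := by unfold dcFactor; positivity

lemma dcFactor_succ_le_half {k : ℕ} (hk : k ≠ 0) : dcFactor (k + 1) ≤ dcFactor k / 2 := by
  have hk0 : (0 : ℚ) < k := by positivity
  have bernoulli : 2 * (k : ℚ) ^ k ≤ (k + 1) ^ k := by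
    have h := one_add_mul_le_pow (a := (1 / k : ℚ)) (by linarith [one_div_pos.2 hk0]) k
    rwa [mul_one_div_cancel hk0.ne', one_add_one_eq_two, one_add_div hk0.ne', div_pow,
      le_div_iff₀ (by positivity)] at h
  have h_succ : dcFactor (k + 1) = k.factorial / (k + 1 : ℚ) ^ k := by
    rw [dcFactor, Nat.factorial_succ, pow_succ]
    push_cast
    field_simp
  rw [h_succ, dcFactor, div_div]
  exact div_le_div_of_nonneg_left (by positivity) (by positivity) (by linarith)

lemma dcFactor_antitone : Antitone dcFactor := by
  refine antitone_nat_of_succ_le fun k => ?_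
  obtain rfl | hk := eq_or_ne k 0
  · simp [dcFactor]
  · linarith [dcFactor_succ_le_half hk, dcFactor_nonneg k]

lemma dcFactor_le_one (k : ℕ) : dcFactor k ≤ 1 := by
  simpa [dcFactor] using dcFactor_antitone k.zero_le

lemma dcFactor_succ_le_half_pow (k : ℕ) : dcFactor (k + 1) ≤ (1 / 2) ^ k := by
  induction k with
  | zero => simpa using dcFactor_le_one 1
  | succ k ih => linarith [dcFactor_succ_le_half k.succ_ne_zero, pow_succ (1 / 2 : ℚ) k]

lemma dcFactor_sq_le_half_pow {k : ℕ} (hk : 2 ≤ k) : dcFactor k ^ 2 ≤ (1 / 2) ^ k := by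
  obtain ⟨k, rfl⟩ := Nat.exists_eq_add_of_le' hk
  calc dcFactor (k + 2) ^ 2 ≤ ((1 / 2) ^ (k + 1)) ^ 2 :=
        pow_le_pow_left₀ (dcFactor_nonneg _) (dcFactor_succ_le_half_pow _) 2
    _ = (1 / 2) ^ (2 * k + 2) := by rw [← pow_mul]; ring_nf
    _ ≤ (1 / 2) ^ (k + 2) := pow_le_pow_of_le_one (by norm_num) (by norm_num) (by lia)

section CommonTransversal

variable {G : Type*} [Group G] {H : Subgroup G}

lemma isDoubleTransversal_self_iff {T : Set G} :
    IsDoubleTransversal H H T ↔ (∀ x : G ⧸ H, ∃! a : G, a ∈ T ∧ (a : G ⧸ H) = x) ∧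
      ∀ y : G ⧸ H, ∃! a : G, a ∈ T ∧ ((a⁻¹ : G) : G ⧸ H) = y := by
  have left_coset (g a : G) : g⁻¹ * a ∈ H ↔ (a : G ⧸ H) = g := by
    rw [eq_comm, QuotientGroup.eq]
  have right_coset (g a : G) : a * g⁻¹ ∈ H ↔ ((a⁻¹ : G) : G ⧸ H) = (g⁻¹ : G) := by
    rw [QuotientGroup.eq, inv_inv]
  simp only [IsDoubleTransversal, left_coset, right_coset]
  rw [QuotientGroup.mk_surjective.forall,
    (QuotientGroup.mk_surjective (s := H).comp inv_surjective).forall]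
  rfl

lemma isDoubleTransversal_range [Finite G] {s : G ⧸ H → G} (hs : ∀ x, (s x : G ⧸ H) = x)
    (hinj : Injective fun x => (((s x)⁻¹ : G) : G ⧸ H)) :
    IsDoubleTransversal H H (Set.range s) := by
  refine isDoubleTransversal_self_iff.2 ⟨fun x => ⟨s x, ⟨⟨x, rfl⟩, hs x⟩, ?_⟩, fun y => ?_⟩
  · rintro _ ⟨⟨z, rfl⟩, hz⟩
    rw [← hz, hs]
  · obtain ⟨x, hx⟩ := Finite.surjective_of_injective hinj y
    refine ⟨s x, ⟨⟨x, rfl⟩, hx⟩, ?_⟩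
    rintro _ ⟨⟨z, rfl⟩, hz⟩
    rw [hinj (hz.trans hx.symm)]

variable (H) in
lemma numDT_self_eq_card_injective_section [Finite G] :
    numDT H H = Nat.card {s : ∀ x : G ⧸ H, {a : G // (a : G ⧸ H) = x} //
      Injective fun x => (((s x : G)⁻¹ : G) : G ⧸ H)} := by
  refine (Nat.card_eq_of_bijective
    (fun s => ⟨_, isDoubleTransversal_range (fun x => (s.1 x).2) s.2⟩)
    ⟨fun s t h => ?_, fun T => ?_⟩).symm
  · have h_range : Set.range (fun x => (s.1 x : G)) = Set.range fun x => (t.1 x : G) :=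
      congrArg Subtype.val h
    ext x
    obtain ⟨z, hz⟩ := h_range.subset (Set.mem_range_self x)
    obtain rfl : z = x := (t.1 z).2.symm.trans ((congrArg _ hz).trans (s.1 x).2)
    exact hz.symm
  · obtain ⟨hl, hr⟩ := isDoubleTransversal_self_iff.1 T.2
    choose s hs huniq using hl
    have hinj : Injective fun x => (((s x)⁻¹ : G) : G ⧸ H) := fun x y h => by
      have h_eq : s x = s y := (hr _).unique ⟨(hs x).1, rfl⟩ ⟨(hs y).1, h.symm⟩
      rw [← (hs x).2, ← (hs y).2, h_eq]
    refine ⟨⟨fun x => ⟨s x, (hs x).2⟩, hinj⟩, Subtype.ext (Set.Subset.antisymm ?_ fun g hg =>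
      ⟨(g : G ⧸ H), (huniq _ g ⟨hg, rfl⟩).symm⟩)⟩
    rintro _ ⟨x, rfl⟩
    exact (hs x).1

lemma card_coset_inter_eq_card_stabilizer {g : G} {x y : G ⧸ H} (hx : x ∈ orbit H (g : G ⧸ H))
    (hy : y ∈ orbit H ((g⁻¹ : G) : G ⧸ H)) :
    Nat.card {a : {a : G // (a : G ⧸ H) = x} // (((a : G)⁻¹ : G) : G ⧸ H) = y} =
      Nat.card (stabilizer H (g : G ⧸ H)) := by
  obtain ⟨h, rfl⟩ := hx
  obtain ⟨k, rfl⟩ := hy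
  have smul_mk (u : H) (a : G) : u • (a : G ⧸ H) = ((u * a : G) : G ⧸ H) := rfl
  have mk_mul (a : G) (u : H) : ((a * u : G) : G ⧸ H) = a := QuotientGroup.mk_mul_of_mem a u.2
  have mk_lift (u : stabilizer H (g : G ⧸ H)) :
      ((h * u * g * (k⁻¹ : H) : G) : G ⧸ H) = h • (g : G ⧸ H) := by
    rw [mk_mul, mul_assoc, ← smul_mk, ← smul_mk, u.2]
  have mk_lift_inv (u : stabilizer H (g : G ⧸ H)) :
      (((h * u * g * (k⁻¹ : H) : G)⁻¹ : G) : G ⧸ H) = k • ((g⁻¹ : G) : G ⧸ H) := by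
    rw [smul_mk, ← mk_mul (k * g⁻¹) (u.1⁻¹ * h⁻¹)]
    congr 1
    push_cast
    group
  refine (Nat.card_eq_of_bijective (fun u => ⟨⟨_, mk_lift u⟩, mk_lift_inv u⟩)
    ⟨fun u v huv => ?_, ?_⟩).symm
  · ext
    simpa using congrArg (fun a => (a.1.1 : G)) huv
  · rintro ⟨⟨a, ha⟩, ha'⟩
    have hu : (h : G)⁻¹ * a * k * g⁻¹ ∈ H := by
      have hmem : (k * g⁻¹)⁻¹ * a⁻¹ ∈ H := QuotientGroup.eq.1 ha'.symm
      simpa [mul_assoc] using H.inv_mem (H.mul_mem hmem h.2)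
    refine ⟨⟨⟨_, hu⟩, ?_⟩, ?_⟩
    · change (((h : G)⁻¹ * a * k * g⁻¹ * g : G) : G ⧸ H) = g
      rw [inv_mul_cancel_right, mk_mul, ← H.coe_inv, ← smul_mk, ha, inv_smul_smul]
    · ext
      simp [mul_assoc]

lemma card_stabilizer_inv (g : G) :
    Nat.card (stabilizer H ((g⁻¹ : G) : G ⧸ H)) = Nat.card (stabilizer H (g : G ⧸ H)) := by
  rw [← card_coset_inter_eq_card_stabilizer (mem_orbit_self _) (mem_orbit_self _),
    ← card_coset_inter_eq_card_stabilizer (mem_orbit_self _) (mem_orbit_self _)]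
  exact Nat.card_congr
    { toFun := fun a => ⟨⟨(a : G)⁻¹, a.2.trans (by rw [inv_inv])⟩, by rw [inv_inv]; exact a.1.2⟩
      invFun := fun a => ⟨⟨(a : G)⁻¹, a.2⟩, by rw [inv_inv, inv_inv]; exact a.1.2⟩
      left_inv := fun a => by ext; exact inv_inv _
      right_inv := fun a => by ext; exact inv_inv _ }

lemma card_orbit_mul_card_stabilizer {M X : Type*} [Group M] [MulAction M X] (x : X) :
    Nat.card (orbit M x) * Nat.card (stabilizer M x) = Nat.card M := by
  rw [Nat.card_coe_set_eq, ← index_stabilizer, Subgroup.index_mul_card]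

lemma card_orbit_inv [Finite G] (g : G) :
    Nat.card (orbit H ((g⁻¹ : G) : G ⧸ H)) = Nat.card (orbit H (g : G ⧸ H)) := by
  refine Nat.eq_of_mul_eq_mul_right (Nat.card_pos (α := stabilizer H (g : G ⧸ H))) ?_
  rw [card_orbit_mul_card_stabilizer, ← card_stabilizer_inv, card_orbit_mul_card_stabilizer]

lemma inv_mem_orbit_inv {a b : G} (h : (a : G ⧸ H) ∈ orbit H (b : G ⧸ H)) :
    ((a⁻¹ : G) : G ⧸ H) ∈ orbit H ((b⁻¹ : G) : G ⧸ H) := by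
  obtain ⟨u, hu⟩ := h
  have hv : (u * b)⁻¹ * a ∈ H := QuotientGroup.eq.1 hu
  refine ⟨⟨_, hv⟩⁻¹, QuotientGroup.eq.2 ?_⟩
  simp [mul_assoc]

/-- The double coset of `H` containing the left coset `x`; double cosets are encoded as the orbits
of `H` on `G ⧸ H`. -/
def doubleCoset (x : G ⧸ H) : orbitRel.Quotient H (G ⧸ H) := Quotient.mk'' x

lemma doubleCoset_eq_iff {x y : G ⧸ H} : doubleCoset x = doubleCoset y ↔ x ∈ orbit H y :=
  Quotient.eq''

lemma doubleCoset_eq_of_inv_eq {a b : G} (h : ((a⁻¹ : G) : G ⧸ H) = (b⁻¹ : G)) :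
    doubleCoset (a : G ⧸ H) = doubleCoset (b : G ⧸ H) := by
  have h_inv : ((a⁻¹ : G) : G ⧸ H) ∈ orbit H ((b⁻¹ : G) : G ⧸ H) := h ▸ mem_orbit_self _
  simpa only [inv_inv] using doubleCoset_eq_iff.2 (inv_mem_orbit_inv h_inv)

lemma card_doubleCoset_fiber (o : orbitRel.Quotient H (G ⧸ H)) :
    Nat.card {x : G ⧸ H // doubleCoset x = o} = Nat.card o.orbit :=
  Nat.card_congr (Equiv.subtypeEquivRight fun _ => orbitRel.Quotient.mem_orbit.symm)

lemma card_injective_section_doubleCoset [Finite G] (o : orbitRel.Quotient H (G ⧸ H)) :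
    (Nat.card {s : ∀ x : {x : G ⧸ H // doubleCoset x = o}, {a : G // (a : G ⧸ H) = x} //
      Injective fun x : {x : G ⧸ H // doubleCoset x = o} => (((s x : G)⁻¹ : G) : G ⧸ H)} : ℚ) =
      dcFactor (Nat.card o.orbit) * Nat.card H ^ Nat.card o.orbit := by
  obtain ⟨g, rfl⟩ := (Quotient.mk''_surjective.comp QuotientGroup.mk_surjective) o
  have card_fiber : Nat.card {x : G ⧸ H // doubleCoset x = doubleCoset (g : G ⧸ H)} =
      Nat.card (orbit H (g : G ⧸ H)) := card_doubleCoset_fiber _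
  have inv_mem (x : {x : G ⧸ H // doubleCoset x = doubleCoset (g : G ⧸ H)})
      (a : {a : G // (a : G ⧸ H) = x}) :
      (((a : G)⁻¹ : G) : G ⧸ H) ∈ orbit H ((g⁻¹ : G) : G ⧸ H) :=
    inv_mem_orbit_inv (by rw [a.2]; exact doubleCoset_eq_iff.1 x.2)
  have card_section := card_injective_section
    (A := fun x : {x : G ⧸ H // doubleCoset x = doubleCoset (g : G ⧸ H)} =>
      {a : G // (a : G ⧸ H) = x}) (fun x a => (((a : G)⁻¹ : G) : G ⧸ H)) _ _ inv_mem
    fun x y hy => card_coset_inter_eq_card_stabilizer (doubleCoset_eq_iff.1 x.2) hy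
  rw [card_fiber, card_orbit_inv, Nat.descFactorial_self] at card_section
  have hk : (Nat.card (orbit H (g : G ⧸ H)) : ℚ) ≠ 0 := by
    have : Nonempty (orbit H (g : G ⧸ H)) := ⟨⟨_, mem_orbit_self _⟩⟩
    exact_mod_cast Nat.card_pos.ne'
  refine (congrArg Nat.cast card_section).trans ?_
  change _ = dcFactor (Nat.card (orbit H (g : G ⧸ H))) * _ ^ Nat.card (orbit H (g : G ⧸ H))
  rw [← card_orbit_mul_card_stabilizer (M := H) (g : G ⧸ H), dcFactor]
  push_cast
  rw [mul_pow]
  field_simp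

theorem transProb_self_eq_prod [Finite G] [Fintype (orbitRel.Quotient H (G ⧸ H))] :
    transProb H H = ∏ o : orbitRel.Quotient H (G ⧸ H), dcFactor (Nat.card o.orbit) := by
  have index_eq_sum : H.index = ∑ o : orbitRel.Quotient H (G ⧸ H), Nat.card o.orbit := by
    rw [Subgroup.index, Nat.card_congr (selfEquivSigmaOrbits' H (G ⧸ H)), Nat.card_sigma]
  have hH : (Nat.card H : ℚ) ≠ 0 := by exact_mod_cast Nat.card_pos.ne'
  rw [transProb, numDT_self_eq_card_injective_section, card_injective_section_eq_prod
    (fun x (a : {a : G // (a : G ⧸ H) = x}) => (((a : G)⁻¹ : G) : G ⧸ H)) doubleCoset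
    fun x y a b h => a.2 ▸ b.2 ▸ doubleCoset_eq_of_inv_eq h, Nat.cast_prod,
    Finset.prod_congr rfl fun o _ => card_injective_section_doubleCoset o,
    Finset.prod_mul_distrib, Finset.prod_pow_eq_pow_sum, ← index_eq_sum]
  exact mul_div_cancel_right₀ _ (pow_ne_zero _ hH)

lemma transProb_self_le_dcFactor [Finite G] (x : G ⧸ H) :
    transProb H H ≤ dcFactor (Nat.card (orbit H x)) := by
  have := Fintype.ofFinite (orbitRel.Quotient H (G ⧸ H))
  rw [transProb_self_eq_prod, ← Finset.mul_prod_erase _ _ (Finset.mem_univ (doubleCoset x))]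
  exact mul_le_of_le_one_right (dcFactor_nonneg _)
    (Finset.prod_le_one (fun _ _ => dcFactor_nonneg _) fun _ _ => dcFactor_le_one _)

lemma transProb_self_pow_le [Finite G] {a : ℕ} {c : ℚ} (hc0 : 0 ≤ c) (hc1 : c ≤ 1)
    (hc : ∀ x ∉ fixedPoints H (G ⧸ H),
      dcFactor (Nat.card (orbit H x)) ^ a ≤ c ^ Nat.card (orbit H x)) :
    transProb H H ^ a ≤ c ^ Nat.card ↥(fixedPoints H (G ⧸ H))ᶜ := by
  have := Fintype.ofFinite (orbitRel.Quotient H (G ⧸ H))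
  let dc (x : ↥(fixedPoints H (G ⧸ H))ᶜ) := doubleCoset x.1
  have card_moved : Nat.card ↥(fixedPoints H (G ⧸ H))ᶜ = ∑ o, Nat.card {x // dc x = o} := by
    rw [← Nat.card_sigma, Nat.card_congr (Equiv.sigmaFiberEquiv dc)]
  rw [transProb_self_eq_prod, ← Finset.prod_pow, card_moved, ← Finset.prod_pow_eq_pow_sum]
  refine Finset.prod_le_prod (fun _ _ => pow_nonneg (dcFactor_nonneg _) _) fun o _ => ?_
  obtain h_empty | ⟨x, rfl⟩ := isEmpty_or_nonempty {x // dc x = o}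
  · rw [Nat.card_of_isEmpty (α := {x // dc x = o}), pow_zero]
    exact pow_le_one₀ (dcFactor_nonneg _) (dcFactor_le_one _)
  · have card_le : Nat.card {y // dc y = dc x} ≤ Nat.card (orbit H x.1) :=
      Nat.card_le_card_of_injective (fun y => ⟨y.1.1, doubleCoset_eq_iff.1 y.2⟩)
        fun y z h => Subtype.ext (Subtype.ext (Subtype.mk.inj h))
    exact (hc x.1 x.2).trans (pow_le_pow_of_le_one hc0 hc1 card_le)

variable (H) in
lemma card_fixedPoints_eq_relIndex_normalizer [Finite G] :
    Nat.card (fixedPoints H (G ⧸ H)) = H.relIndex (Subgroup.normalizer (H : Set G)) :=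
  Nat.card_congr (Sylow.fixedPointsMulLeftCosetsEquivQuotient H)

variable (H) in
lemma card_moved_add_relIndex_normalizer [Finite G] :
    Nat.card ↥(fixedPoints H (G ⧸ H))ᶜ + H.relIndex (Subgroup.normalizer (H : Set G)) =
      H.index := by
  rw [← card_fixedPoints_eq_relIndex_normalizer, add_comm, Nat.card_coe_set_eq,
    Nat.card_coe_set_eq, Set.ncard_add_ncard_compl, Subgroup.index]

end CommonTransversal

/-! ### Non-normal subgroups when `tp G > 4 / 81` -/

section TransversalProbability

variable {G : Type*} [Group G] [Finite G] {H : Subgroup G}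

lemma tp_le_transProb_self (H : Subgroup G) : tp G ≤ transProb H H := by
  unfold tp
  exact Finset.inf'_le _ (@Finset.mem_univ _ (_) H)

lemma two_le_card_orbit {x : G ⧸ H} (hx : x ∉ fixedPoints H (G ⧸ H)) :
    2 ≤ Nat.card (orbit H x) := by
  refine (Nat.two_le_iff _).2 ⟨?_, fun h => hx ?_⟩
  · have : Nonempty (orbit H x) := ⟨⟨_, mem_orbit_self x⟩⟩
    exact Nat.card_pos.ne'
  · rw [← subsingleton_orbit_iff_mem_fixedPoints, ← Set.subsingleton_coe]
    exact (Nat.card_eq_one_iff_unique.1 h).1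

lemma two_le_index_normalizer (hH : ¬ H.Normal) :
    2 ≤ (Subgroup.normalizer (H : Set G)).index := by
  refine (Nat.two_le_iff _).2 ⟨Subgroup.index_ne_zero_of_finite, ?_⟩
  rwa [Ne, Subgroup.index_eq_one, Subgroup.normalizer_eq_top_iff]

lemma index_le_sixteen (h : 4 / 81 < tp G) (hH : ¬ H.Normal) : H.index ≤ 16 := by
  have card_moved_le : Nat.card ↥(fixedPoints H (G ⧸ H))ᶜ ≤ 8 := by
    by_contra! h_nine
    have hP := h.trans_le (tp_le_transProb_self H)
    refine absurd (pow_lt_pow_left₀ hP (by norm_num) two_ne_zero) (not_lt.2 ?_)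
    calc transProb H H ^ 2 ≤ (1 / 2) ^ Nat.card ↥(fixedPoints H (G ⧸ H))ᶜ :=
          transProb_self_pow_le (by norm_num) (by norm_num) fun x hx =>
            dcFactor_sq_le_half_pow (two_le_card_orbit hx)
      _ ≤ (1 / 2) ^ 9 := pow_le_pow_of_le_one (by norm_num) (by norm_num) h_nine
      _ ≤ (4 / 81) ^ 2 := by norm_num
  have index_eq := Subgroup.relIndex_mul_index (Subgroup.le_normalizer (H := H))
  have moved_add := card_moved_add_relIndex_normalizer H
  nlinarith [two_le_index_normalizer hH]

lemma card_orbit_eq_three {p : ℕ} [Fact p.Prime] (hp : p ≠ 2) (hH : IsPGroup p H)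
    (h : 4 / 81 < tp G) {x : G ⧸ H} (hx : x ∉ fixedPoints H (G ⧸ H)) :
    p = 3 ∧ Nat.card (orbit H x) = 3 := by
  obtain ⟨n, hn⟩ := hH.card_orbit x
  have card_lt : p ^ n < 5 := by
    by_contra! h_five
    have hle := (transProb_self_le_dcFactor x).trans (dcFactor_antitone (hn ▸ h_five))
    have : dcFactor 5 < 4 / 81 := by norm_num [dcFactor, Nat.factorial]
    linarith [tp_le_transProb_self H]
  have p_ge : 3 ≤ p := (Fact.out : p.Prime).two_le.lt_of_ne hp.symm
  have n_eq : n = 1 := by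
    have n_ne_zero : n ≠ 0 := by
      rintro rfl
      have := two_le_card_orbit hx
      lia
    have n_lt_two : n < 2 := by
      by_contra! hn2
      have := (Nat.pow_le_pow_left p_ge 2).trans (Nat.pow_le_pow_right (by lia) hn2)
      lia
    lia
  have p_ne_four : p ≠ 4 := by
    rintro rfl
    exact absurd (Fact.out : (4).Prime) (by norm_num)
  subst n_eq
  lia

lemma card_moved_eq_three {p : ℕ} [Fact p.Prime] (hp : p ≠ 2) (hH : IsPGroup p H)
    (hn : ¬ H.Normal) (h : 4 / 81 < tp G) : Nat.card ↥(fixedPoints H (G ⧸ H))ᶜ = 3 := by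
  have h_orbit {x : G ⧸ H} (hx : x ∉ fixedPoints H (G ⧸ H)) := card_orbit_eq_three hp hH h hx
  have card_lt_six : Nat.card ↥(fixedPoints H (G ⧸ H))ᶜ < 6 := by
    by_contra! h_six
    have hP := h.trans_le (tp_le_transProb_self H)
    refine absurd (pow_lt_pow_left₀ hP (by norm_num) three_ne_zero) (not_lt.2 ?_)
    calc transProb H H ^ 3 ≤ (2 / 9) ^ Nat.card ↥(fixedPoints H (G ⧸ H))ᶜ :=
          transProb_self_pow_le (by norm_num) (by norm_num) fun x hx => by
            rw [(h_orbit hx).2]; norm_num [dcFactor, Nat.factorial]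
      _ ≤ (2 / 9) ^ 6 := pow_le_pow_of_le_one (by norm_num) (by norm_num) h_six
      _ = (4 / 81) ^ 3 := by norm_num
  have moved_add := card_moved_add_relIndex_normalizer H
  have card_pos : 0 < Nat.card ↥(fixedPoints H (G ⧸ H))ᶜ := by
    have index_eq := Subgroup.relIndex_mul_index (Subgroup.le_normalizer (H := H))
    have index_pos := Nat.pos_of_ne_zero (Subgroup.index_ne_zero_of_finite (H := H))
    nlinarith [two_le_index_normalizer hn]
  have three_dvd : 3 ∣ Nat.card ↥(fixedPoints H (G ⧸ H))ᶜ := by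
    obtain ⟨⟨x, hx⟩⟩ := (Nat.card_pos_iff.1 card_pos).1
    obtain ⟨rfl, -⟩ := h_orbit hx
    have h_mod := hH.card_modEq_card_fixedPoints (G ⧸ H)
    rw [card_fixedPoints_eq_relIndex_normalizer, ← Subgroup.index, ← moved_add,
      Nat.ModEq] at h_mod
    lia
  lia

lemma index_normalizer_of_odd {p : ℕ} [Fact p.Prime] (hp : p ≠ 2) (hH : IsPGroup p H)
    (hn : ¬ H.Normal) (h : 4 / 81 < tp G) :
    Subgroup.normalizer (H : Set G) = H ∧ H.index = 4 ∨
      (Subgroup.normalizer (H : Set G)).index = 2 ∧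
        H.relIndex (Subgroup.normalizer (H : Set G)) = 3 := by
  have index_eq := Subgroup.relIndex_mul_index (Subgroup.le_normalizer (H := H))
  have moved_add := card_moved_add_relIndex_normalizer H
  have two_le := two_le_index_normalizer hn
  rw [card_moved_eq_three hp hH hn h, ← index_eq] at moved_add
  set r := H.relIndex (Subgroup.normalizer (H : Set G))
  set m := (Subgroup.normalizer (H : Set G)).index
  have m_eq : r * (m - 1) = 3 := by
    rw [Nat.mul_sub_one]
    lia
  obtain r_eq | r_eq := (Nat.dvd_prime Nat.prime_three).1 (Dvd.intro _ m_eq)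
  · refine .inl ⟨(Subgroup.relIndex_eq_one.1 r_eq).antisymm Subgroup.le_normalizer, ?_⟩
    rw [r_eq] at m_eq index_eq
    lia
  · refine .inr ⟨?_, r_eq⟩
    rw [r_eq] at m_eq
    lia

end TransversalProbability

/-! ### Groups with a large abelian subgroup -/

section

open scoped commutatorElement IsMulCommutative

variable {G : Type*} [Group G]

lemma commutator_le_centralizer_of_isCyclic (N : Subgroup G) [N.Normal] [IsCyclic N] :
    commutator G ≤ Subgroup.centralizer (N : Set G) := by
  let conj : G →* (ZMod (Nat.card N))ˣ :=
    (IsCyclic.mulAutMulEquiv N).toMonoidHom.comp MulAut.conjNormal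
  intro g hg
  have conj_eq : MulAut.conjNormal g = (1 : MulAut N) := by
    have := MonoidHom.mem_ker.1 (Abelianization.commutator_subset_ker conj hg)
    exact (IsCyclic.mulAutMulEquiv N).map_eq_one_iff.1 this
  refine Subgroup.mem_centralizer_iff.2 fun x hx => ?_
  have := congrArg Subtype.val (DFunLike.congr_fun conj_eq ⟨x, hx⟩)
  rw [MulAut.conjNormal_apply, MulAut.one_apply] at this
  exact (mul_inv_eq_iff_eq_mul.1 this).symm

lemma map_commutator_of_surjective {G' : Type*} [Group G'] {f : G →* G'}
    (hf : Function.Surjective f) : (commutator G).map f = commutator G' := by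
  rw [map_commutator_eq, MonoidHom.range_eq_top.2 hf, commutator_def]

section IndexTwo

variable {A : Subgroup G} {g e : G}

lemma conj_commutatorElement_eq_inv (hA : A.index = 2) [IsMulCommutative A] (hg : g ∉ A)
    (p q : G) : g * ⁅p, q⁆ * g⁻¹ = ⁅p, q⁆⁻¹ := by
  have normal := Subgroup.normal_of_index_eq_two hA
  have commute {a b : G} (ha : a ∈ A) (hb : b ∈ A) : Commute a b := setLike_mul_comm ha hb
  have inv_mul_mem {x y : G} (hx : x ∉ A) (hy : y ∉ A) : x⁻¹ * y ∈ A := by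
    rw [Subgroup.mul_mem_iff_of_index_two hA, inv_mem_iff]
    tauto
  have conj_eq {x a : G} (hx : x ∉ A) (ha : a ∈ A) : g * a * g⁻¹ = x * a * x⁻¹ := by
    have := commute (inv_mul_mem hx hg) ha
    calc g * a * g⁻¹ = x * (x⁻¹ * g * a) * g⁻¹ := by group
      _ = x * a * x⁻¹ := by rw [this.eq]; group
  have commutator_mem (x : G) {a : G} (ha : a ∈ A) : ⁅x, a⁆ ∈ A :=
    A.mul_mem (normal.conj_mem a ha x) (A.inv_mem ha)
  have conj_commutator_self (x : G) {a : G} (ha : a ∈ A) :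
      x * ⁅x, a⁆ * x⁻¹ = ⁅x, a⁆⁻¹ := by
    have := commute (Subgroup.mul_self_mem_of_index_two hA x) ha
    calc x * ⁅x, a⁆ * x⁻¹ = x * x * a * (x * x)⁻¹ * (x * a⁻¹ * x⁻¹) := by group
      _ = ⁅x, a⁆⁻¹ := by rw [this.eq]; group
  have conj_commutator {x a : G} (hx : x ∉ A) (ha : a ∈ A) : g * ⁅x, a⁆ * g⁻¹ = ⁅x, a⁆⁻¹ := by
    rw [conj_eq hx (commutator_mem x ha), conj_commutator_self x ha]
  by_cases hp : p ∈ A <;> by_cases hq : q ∈ A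
  · rw [commutatorElement_eq_one_iff_commute.2 (commute hp hq)]
    group
  · rw [← commutatorElement_inv, ← conj_inv, conj_commutator hq hp]
  · exact conj_commutator hp hq
  · have hb := inv_mul_mem hp hq
    have eq_inv : ⁅p, q⁆ = ⁅p, p⁻¹ * q⁆⁻¹ := by
      rw [← conj_commutator_self p hb]
      group
    rw [eq_inv, ← conj_inv, conj_commutator hp hb]

lemma commutator_le_of_index_eq_two (hA : A.index = 2) : commutator G ≤ A := by
  have := Subgroup.normal_of_index_eq_two hA
  have : IsCyclic (G ⧸ A) := isCyclic_of_prime_card (p := 2) hA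
  exact Subgroup.Normal.quotient_commutative_iff_commutator_le.1 inferInstance

lemma conj_eq_inv_of_mem_commutator (hA : A.index = 2) [IsMulCommutative A] (hg : g ∉ A)
    (he : e ∈ commutator G) : g * e * g⁻¹ = e⁻¹ := by
  have hle := commutator_le_of_index_eq_two hA
  rw [commutator_eq_closure] at he hle
  induction he using Subgroup.closure_induction with
  | mem x hx =>
    obtain ⟨p, q, rfl⟩ := hx
    exact conj_commutatorElement_eq_inv hA hg p q
  | one => group
  | mul x y hx hy ihx ihy =>
    rw [setLike_mul_comm (hle hx) (hle hy), mul_inv_rev, ← ihx, ← ihy, conj_mul,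
      setLike_mul_comm (hle hx) (hle hy)]
  | inv x _ ih => rw [← conj_inv, ih]

lemma conj_mul_self_mem_commutator (hA : A.index = 2) (hg : g ∉ A) (he : e ∈ commutator G) :
    g * e * g⁻¹ * e ∈ ⁅A, A⁆ := by
  have := Subgroup.normal_of_index_eq_two hA
  let π := QuotientGroup.mk' ⁅A, A⁆
  have ker_le : π.ker ≤ A := (QuotientGroup.ker_mk' _).trans_le (Subgroup.commutator_le_self A)
  have : IsMulCommutative (A.map π) := by
    rw [← Subgroup.commutator_self_eq_bot_iff, ← Subgroup.map_commutator,
      (Subgroup.map_eq_bot_iff _), QuotientGroup.ker_mk']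
  have conj_eq : π g * π e * (π g)⁻¹ = (π e)⁻¹ := by
    refine conj_eq_inv_of_mem_commutator (A := A.map π) ?_ ?_ ?_
    · rwa [A.index_map_eq (QuotientGroup.mk'_surjective _) ker_le]
    · rwa [← Subgroup.mem_comap, Subgroup.comap_map_eq_self ker_le]
    · exact (map_commutator_of_surjective (QuotientGroup.mk'_surjective _)).le
        (Subgroup.mem_map_of_mem π he)
  rw [eq_inv_iff_mul_eq_one] at conj_eq
  exact (QuotientGroup.eq_one_iff _).1 conj_eq

end IndexTwo

lemma isMulCommutative_of_le {H K : Subgroup G} (h : H ≤ K) [IsMulCommutative K] :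
    IsMulCommutative H :=
  .of_setLike_mul_comm fun _ hx _ hy => setLike_mul_comm (h hx) (h hy)

section PrimeRelIndex

variable {p : ℕ} [Fact p.Prime] {H : Subgroup G}

lemma eq_or_eq_of_relIndex_eq_prime {M N : Subgroup G} (hHM : H ≤ M) (hMN : M ≤ N)
    (hp : H.relIndex N = p) : M = H ∨ M = N := by
  have p_prime : p.Prime := Fact.out
  have relIndex_mul := Subgroup.relIndex_mul_relIndex H M N hHM hMN
  rw [hp] at relIndex_mul
  obtain h_one | h_eq := p_prime.eq_one_or_self_of_dvd _ (Dvd.intro _ relIndex_mul)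
  · exact .inl ((Subgroup.relIndex_eq_one.1 h_one).antisymm hHM)
  · rw [h_eq, Nat.mul_eq_left p_prime.ne_zero] at relIndex_mul
    exact .inr (hMN.antisymm (Subgroup.relIndex_eq_one.1 relIndex_mul))

lemma commutator_self_le_of_prime_relIndex {N : Subgroup G}
    (hN : N ≤ Subgroup.normalizer (H : Set G)) (hp : H.relIndex N = p) : ⁅N, N⁆ ≤ H := by
  have : (H.subgroupOf N).Normal := Subgroup.normal_subgroupOf_of_le_normalizer hN
  have : IsCyclic (N ⧸ H.subgroupOf N) := isCyclic_of_prime_card hp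
  have hle : commutator N ≤ H.subgroupOf N :=
    Subgroup.Normal.quotient_commutative_iff_commutator_le.1 inferInstance
  rwa [← Subgroup.map_subtype_commutator, Subgroup.map_le_iff_le_comap]

variable [Finite G]

lemma isMulCommutative_commutator_of_sylow (P : Sylow p G) [IsMulCommutative P]
    (hn : Subgroup.normalizer (P : Set G) = P) {q : ℕ} [Fact q.Prime] (hq : P.index = q ^ 2) :
    IsMulCommutative (commutator G) := by
  have hP : Subgroup.normalizer (P : Set G) ≤ Subgroup.centralizer (P : Set G) :=
    hn.trans_le P.le_centralizer
  let K := (MonoidHom.transferSylow P hP).ker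
  have card_eq : Nat.card K = q ^ 2 := by
    rw [← hq, (MonoidHom.ker_transferSylow_isComplement' P hP).index_eq_card]
  have := IsPGroup.isMulCommutative_of_card_eq_prime_sq card_eq
  have hle : commutator G ≤ K := Abelianization.commutator_subset_ker _
  exact isMulCommutative_of_le hle

lemma commutator_inf_le_centralizer_normalizer [IsMulCommutative H]
    (hN : (Subgroup.normalizer (H : Set G)).index = 2)
    (hp : H.relIndex (Subgroup.normalizer (H : Set G)) = p) :
    commutator G ⊓ H ≤ Subgroup.centralizer (Subgroup.normalizer (H : Set G) : Set G) := by
  set N := Subgroup.normalizer (H : Set G)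
  rintro e ⟨he, heH⟩
  obtain ⟨g, hg⟩ : ∃ g, g ∉ N := by
    by_contra! h_top
    rw [(Subgroup.eq_top_iff' N).2 h_top, Subgroup.index_top] at hN
    lia
  have conj_mem : g * e * g⁻¹ ∈ H := by
    rw [← H.mul_mem_cancel_right heH]
    exact commutator_self_le_of_prime_relIndex le_rfl hp (conj_mul_self_mem_commutator hN hg he)
  let M := Subgroup.centralizer {e} ⊓ N
  have mem_M {x : G} : x ∈ M ↔ x * e = e * x ∧ x ∈ N := by
    rw [Subgroup.mem_inf, Subgroup.mem_centralizer_singleton_iff]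
  have le_M : H ≤ M := fun x hx => mem_M.2 ⟨setLike_mul_comm hx heH, Subgroup.le_normalizer hx⟩
  obtain M_eq | M_eq := eq_or_eq_of_relIndex_eq_prime le_M inf_le_right hp
  · refine absurd (inv_mem_iff.1 (Subgroup.mem_normalizer_fintype fun x hx => ?_)) hg
    rw [SetLike.mem_coe, ← M_eq, mem_M]
    refine ⟨?_, (Subgroup.normal_of_index_eq_two hN).conj_mem x (Subgroup.le_normalizer hx) _⟩
    have commute := setLike_mul_comm hx conj_mem
    calc g⁻¹ * x * g⁻¹⁻¹ * e = g⁻¹ * (x * (g * e * g⁻¹)) * g := by group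
      _ = e * (g⁻¹ * x * g⁻¹⁻¹) := by rw [commute]; group
  · exact fun x hx => ((mem_M.1 (M_eq.ge hx)).1)

lemma isMulCommutative_commutator_of_index_normalizer_eq_two [IsMulCommutative H]
    (hN : (Subgroup.normalizer (H : Set G)).index = 2)
    (hp : H.relIndex (Subgroup.normalizer (H : Set G)) = p) :
    IsMulCommutative (commutator G) := by
  set N := Subgroup.normalizer (H : Set G)
  have hle := commutator_le_of_index_eq_two hN
  have : IsCyclic (N ⧸ H.subgroupOf N) := isCyclic_of_prime_card hp
  let f := (QuotientGroup.mk' (H.subgroupOf N)).comp (Subgroup.inclusion hle)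
  refine f.isMulCommutative_of_isCyclic_of_ker_le_center fun x hx => ?_
  have x_mem : (x : G) ∈ H :=
    (QuotientGroup.eq_one_iff (N := H.subgroupOf N) (Subgroup.inclusion hle x)).1 hx
  have := commutator_inf_le_centralizer_normalizer hN hp ⟨x.2, x_mem⟩
  exact Subgroup.mem_center_iff.2 fun y => Subtype.ext (this y (hle y.2))

end PrimeRelIndex

end

/-! ### Small `2`-groups -/

section

open scoped commutatorElement

variable {G : Type*} [Group G]

lemma isMulCommutative_of_index_center_lt_four [Finite G] (h : (Subgroup.center G).index < 4) :
    IsMulCommutative G := by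
  have : IsCyclic (G ⧸ Subgroup.center G) := by
    have card_pos : 0 < Nat.card (G ⧸ Subgroup.center G) := Nat.card_pos
    rw [Subgroup.index] at h
    interval_cases card_eq : Nat.card (G ⧸ Subgroup.center G)
    · exact isCyclic_of_card_dvd_prime (p := 2) (card_eq ▸ one_dvd 2)
    · exact isCyclic_of_prime_card (p := 2) card_eq
    · exact isCyclic_of_prime_card (p := 3) card_eq
  exact isMulCommutative_of_isCyclic_quotient_center_self G

lemma isMulCommutative_of_relIndex_lt_four [Finite G] {H K : Subgroup G}
    (hK : K ≤ Subgroup.centralizer (H : Set G)) (h : K.relIndex H < 4) : IsMulCommutative H := by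
  have le_center : K.subgroupOf H ≤ Subgroup.center H := fun x hx =>
    Subgroup.mem_center_iff.2 fun y => Subtype.ext (hK hx y y.2)
  exact isMulCommutative_of_index_center_lt_four ((Subgroup.index_antitone le_center).trans_lt h)

lemma normal_of_le_center {H : Subgroup G} (hH : H ≤ Subgroup.center G) : H.Normal :=
  ⟨fun x hx g => by rwa [Subgroup.mem_center_iff.1 (hH hx) g, mul_inv_cancel_right]⟩

lemma one_lt_relIndex [Finite G] {H K : Subgroup G} (h : ¬ K ≤ H) : 1 < H.relIndex K := by
  have := Subgroup.relIndex_eq_one.not.2 h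
  have : H.relIndex K ≠ 0 := Subgroup.index_ne_zero_of_finite
  lia

lemma index_centralizer_le_card {u : G} {K : Subgroup G} [Finite K]
    (h : ∀ g : G, ⁅g, u⁆ ∈ K) : (Subgroup.centralizer {u}).index ≤ Nat.card K := by
  have mem (q : G ⧸ Subgroup.centralizer {u}) :
      (Subgroup.quotientCentralizerEmbedding u q : G) ∈ K :=
    q.induction_on h
  refine Nat.card_le_card_of_injective (fun q => (⟨_, mem q⟩ : K)) fun q r hqr => ?_
  exact (Subgroup.quotientCentralizerEmbedding u).injective (Subtype.ext (Subtype.mk.inj hqr))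

lemma mk_mem_center_iff {K : Subgroup G} [K.Normal] {x : G} :
    (x : G ⧸ K) ∈ Subgroup.center (G ⧸ K) ↔ ∀ g : G, ⁅g, x⁆ ∈ K := by
  rw [Subgroup.mem_center_iff, (QuotientGroup.mk'_surjective K).forall]
  refine forall_congr' fun g => ?_
  rw [← commutatorElement_eq_one_iff_mul_comm, ← QuotientGroup.eq_one_iff]
  rfl

lemma commutatorElement_mem_zpowers {a b : G} (index_eq : (Subgroup.centralizer {b}).index = 2)
    (ha : a ∉ Subgroup.centralizer {b}) (g : G) : ⁅g, b⁆ ∈ Subgroup.zpowers ⁅a, b⁆ := by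
  have mem_A {x : G} : x ∈ Subgroup.centralizer {b} ↔ x * b = b * x :=
    Subgroup.mem_centralizer_singleton_iff
  by_cases hg : g ∈ Subgroup.centralizer {b}
  · rw [commutatorElement_eq_one_iff_mul_comm.2 (mem_A.1 hg)]
    exact Subgroup.one_mem _
  · have hx : a⁻¹ * g ∈ Subgroup.centralizer {b} := by
      rw [Subgroup.mul_mem_iff_of_index_two index_eq, inv_mem_iff]
      tauto
    have : ⁅g, b⁆ = ⁅a, b⁆ :=
      calc ⁅g, b⁆ = a * (a⁻¹ * g * b) * g⁻¹ * b⁻¹ := by group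
        _ = ⁅a, b⁆ := by rw [mem_A.1 hx]; group
    exact this ▸ Subgroup.mem_zpowers _

section CenterIndexFour

variable [Finite G] {a b : G} (h : (Subgroup.center G).index ≤ 4)
include h

section

variable (hb : b ∉ Subgroup.center G)
include hb

lemma index_centralizer_eq_two_of_index_center_le_four :
    (Subgroup.centralizer {b}).index = 2 ∧
      (Subgroup.center G).relIndex (Subgroup.centralizer {b}) = 2 := by
  have index_mul := Subgroup.relIndex_mul_index (Subgroup.center_le_centralizer {b})
  have one_lt := one_lt_relIndex fun hle =>
    hb (hle (Subgroup.mem_centralizer_singleton_iff.2 rfl))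
  have one_lt' : 1 < (Subgroup.centralizer {b}).index :=
    Subgroup.one_lt_index_of_ne_top fun h_top =>
      hb (Subgroup.centralizer_eq_top_iff_subset.1 h_top rfl)
  constructor <;> nlinarith

lemma commutator_le_of_index_center_le_four {K : Subgroup G} [K.Normal]
    (hK : ∀ g : G, ⁅g, b⁆ ∈ K) : commutator G ≤ K := by
  rw [← Subgroup.Normal.quotient_commutative_iff_commutator_le]
  let π := QuotientGroup.mk' K
  have lt_comap : Subgroup.center G < (Subgroup.center (G ⧸ K)).comap π := by
    refine lt_of_le_not_ge (fun x hx => mk_mem_center_iff.2 fun g => ?_)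
      fun hle => hb (hle (mk_mem_center_iff.2 hK))
    rw [commutatorElement_eq_one_iff_mul_comm.2 (Subgroup.mem_center_iff.1 hx g)]
    exact K.one_mem
  refine isMulCommutative_of_index_center_lt_four ?_
  rw [← Subgroup.index_comap_of_surjective _ (QuotientGroup.mk'_surjective K)]
  exact (Subgroup.index_strictAnti lt_comap).trans_le h

end

lemma commutatorElement_sq_and_mem_center_of_index_center_le_four (a b : G) :
    ⁅a, b⁆ ^ 2 = 1 ∧ ⁅a, b⁆ ∈ Subgroup.center G := by
  by_cases hab : a * b = b * a
  · rw [commutatorElement_eq_one_iff_mul_comm.2 hab]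
    exact ⟨one_pow 2, Subgroup.one_mem _⟩
  let A := Subgroup.centralizer {b}
  have mem_A {x : G} : x ∈ A ↔ x * b = b * x := Subgroup.mem_centralizer_singleton_iff
  obtain ⟨index_A, relIndex_A⟩ := index_centralizer_eq_two_of_index_center_le_four h
    fun hb => hab (Subgroup.mem_center_iff.1 hb a)
  have : IsMulCommutative A :=
    isMulCommutative_of_relIndex_lt_four (Subgroup.center_le_centralizer _) (by lia)
  have c_mem : ⁅a, b⁆ ∈ A := commutator_le_of_index_eq_two index_A
    (Subgroup.commutator_mem_commutator trivial trivial)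
  have c_sq : ⁅a, b⁆ * ⁅a, b⁆ = 1 := by
    have b_sq : b * b ∈ Subgroup.center G :=
      Subgroup.mul_self_mem_of_index_two relIndex_A ⟨b, mem_A.2 rfl⟩
    calc ⁅a, b⁆ * ⁅a, b⁆ = ⁅a, b⁆ * b * ⁅a, b⁆ * b⁻¹ := by
          rw [mul_assoc _ b, ← mem_A.1 c_mem]; group
      _ = ⁅a, b * b⁆ := by group
      _ = 1 := commutatorElement_eq_one_iff_mul_comm.2 (Subgroup.mem_center_iff.1 b_sq a)
  refine ⟨(sq _).trans c_sq, Subgroup.mem_center_iff.2 fun x => ?_⟩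
  by_cases hx : x ∈ A
  · exact setLike_mul_comm hx c_mem
  · rw [← mul_inv_eq_iff_eq_mul, conj_commutatorElement_eq_inv index_A hx,
      inv_eq_of_mul_eq_one_left c_sq]

lemma card_commutator_le_two_of_index_center_le_four : Nat.card (commutator G) ≤ 2 := by
  by_cases hG : IsMulCommutative G
  · rw [(commutator_eq_bot_iff G).2 hG, Subgroup.card_bot]
    exact one_le_two
  obtain ⟨a, b, hab⟩ : ∃ a b : G, a * b ≠ b * a := by
    simpa only [isMulCommutative_iff, not_forall] using hG
  have hb : b ∉ Subgroup.center G := fun hb => hab (Subgroup.mem_center_iff.1 hb a)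
  have ha : a ∉ Subgroup.centralizer {b} := mt Subgroup.mem_centralizer_singleton_iff.1 hab
  obtain ⟨c_sq, c_central⟩ := commutatorElement_sq_and_mem_center_of_index_center_le_four h a b
  have : (Subgroup.zpowers ⁅a, b⁆).Normal := normal_of_le_center (by rwa [Subgroup.zpowers_le])
  have index_eq := (index_centralizer_eq_two_of_index_center_le_four h hb).1
  calc Nat.card (commutator G) ≤ Nat.card (Subgroup.zpowers ⁅a, b⁆) :=
        Subgroup.card_le_of_le (commutator_le_of_index_center_le_four h hb
          (commutatorElement_mem_zpowers index_eq ha))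
    _ = orderOf ⁅a, b⁆ := Nat.card_zpowers _
    _ ≤ 2 := orderOf_le_of_pow_eq_one two_pos c_sq

end CenterIndexFour

lemma card_le_card_ker_mul_card_map [Finite G] {G' : Type*} [Group G'] (f : G →* G')
    (K : Subgroup G) :
    Nat.card K ≤ Nat.card f.ker * Nat.card (K.map f) := by
  rw [← Subgroup.relIndex_ker, ← Subgroup.inf_relIndex_right, ← Subgroup.relIndex_bot_left K,
    ← Subgroup.relIndex_mul_relIndex ⊥ (f.ker ⊓ K) K bot_le inf_le_right,
    Subgroup.relIndex_bot_left]
  exact Nat.mul_le_mul_right _ (Subgroup.card_le_of_le inf_le_left)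

lemma nontrivial_center_quotient_center [Finite G] {p : ℕ} [Fact p.Prime] (hG : IsPGroup p G)
    (h : Subgroup.center G ≠ ⊤) : Nontrivial (Subgroup.center (G ⧸ Subgroup.center G)) := by
  have : Nontrivial (G ⧸ Subgroup.center G) := by
    rw [← Finite.one_lt_card_iff_nontrivial, ← Subgroup.index]
    exact Subgroup.one_lt_index_of_ne_top h
  exact (hG.to_quotient _).center_nontrivial

section CardLeSixteen

variable [Finite G] (hG : IsPGroup 2 G) (h : Nat.card G ≤ 16)
  (hZ : 4 < (Subgroup.center G).index)
include hG h hZ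

lemma card_center_eq_two : Nat.card (Subgroup.center G) = 2 ∧ (Subgroup.center G).index = 8 := by
  obtain ⟨m, hm⟩ := hG.index (Subgroup.center G)
  obtain ⟨n, hn⟩ := IsPGroup.iff_card.1 (hG.to_subgroup (Subgroup.center G))
  have two_lt : 2 < m := (Nat.pow_lt_pow_iff_right one_lt_two).1 (hm ▸ hZ)
  have n_pos : 0 < n := by
    have : Nontrivial G := by
      rw [← Finite.one_lt_card_iff_nontrivial]
      have := Nat.le_of_dvd Nat.card_pos (Subgroup.center G).index_dvd_card
      lia
    have := Finite.one_lt_card_iff_nontrivial.2 hG.center_nontrivial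
    exact Nat.pos_of_ne_zero fun h_zero => by simp [hn, h_zero] at this
  have add_le : m + n ≤ 4 := by
    rw [← Nat.pow_le_pow_iff_right one_lt_two, pow_add, ← hm, ← hn, Subgroup.index_mul_card]
    exact h
  obtain ⟨rfl, rfl⟩ : m = 3 ∧ n = 1 := by lia
  exact ⟨hn, hm⟩

lemma exists_isMulCommutative_index_eq_two :
    ∃ A : Subgroup G, A.index = 2 ∧ IsMulCommutative A := by
  obtain ⟨card_eq, index_eq⟩ := card_center_eq_two hG h hZ
  have center_ne_top : Subgroup.center G ≠ ⊤ := fun h_top => by simp [h_top] at index_eq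
  have := nontrivial_center_quotient_center hG center_ne_top
  obtain ⟨⟨w, hw⟩, w_ne⟩ := exists_ne (1 : Subgroup.center (G ⧸ Subgroup.center G))
  obtain ⟨u, rfl⟩ := QuotientGroup.mk_surjective w
  have hu : u ∉ Subgroup.center G := fun hu =>
    w_ne (Subtype.ext ((QuotientGroup.eq_one_iff u).2 hu))
  let A := Subgroup.centralizer {u}
  have index_A : A.index = 2 := by
    have one_lt : 1 < A.index := Subgroup.one_lt_index_of_ne_top fun h_top =>
      hu (Subgroup.centralizer_eq_top_iff_subset.1 h_top rfl)
    exact ((index_centralizer_le_card (mk_mem_center_iff.1 hw)).trans_eq card_eq).antisymm one_lt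
  refine ⟨A, index_A, ?_⟩
  let K := A ⊓ Subgroup.centralizer (A : Set G)
  have center_lt : Subgroup.center G < K := by
    refine lt_of_le_not_ge (le_inf (Subgroup.center_le_centralizer _)
      (Subgroup.center_le_centralizer _)) fun hle => hu (hle ⟨?_, fun x hx => ?_⟩)
    · exact Subgroup.mem_centralizer_singleton_iff.2 rfl
    · exact Subgroup.mem_centralizer_singleton_iff.1 hx
  have relIndex_lt : K.relIndex A < 4 := by
    have := Subgroup.index_strictAnti center_lt
    rw [← Subgroup.relIndex_mul_index (inf_le_left : K ≤ A)] at this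
    lia
  exact isMulCommutative_of_relIndex_lt_four inf_le_right relIndex_lt

lemma card_commutator_le_four : Nat.card (commutator G) ≤ 4 := by
  obtain ⟨card_eq, index_eq⟩ := card_center_eq_two hG h hZ
  let π := QuotientGroup.mk' (Subgroup.center G)
  have index_le : (Subgroup.center (G ⧸ Subgroup.center G)).index ≤ 4 := by
    have index_mul := (Subgroup.center (G ⧸ Subgroup.center G)).index_mul_card
    have center_ne_top : Subgroup.center G ≠ ⊤ := fun h_top => by simp [h_top] at index_eq
    have := Finite.one_lt_card_iff_nontrivial.2
      (nontrivial_center_quotient_center hG center_ne_top)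
    rw [← Subgroup.index, index_eq] at index_mul
    nlinarith
  calc Nat.card (commutator G) ≤ Nat.card π.ker * Nat.card ((commutator G).map π) :=
        card_le_card_ker_mul_card_map π _
    _ ≤ 2 * 2 := by
        rw [QuotientGroup.ker_mk', card_eq,
          map_commutator_of_surjective (QuotientGroup.mk'_surjective _)]
        exact Nat.mul_le_mul_left 2 (card_commutator_le_two_of_index_center_le_four index_le)

end CardLeSixteen

lemma isCyclic_commutator_of_card_le_sixteen [Finite G] (hG : IsPGroup 2 G)
    (h : Nat.card G ≤ 16) : IsCyclic (commutator G) := by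
  have isCyclic_of_card_le_two (hle : Nat.card (commutator G) ≤ 2) : IsCyclic (commutator G) := by
    refine isCyclic_of_card_dvd_prime (p := 2) ?_
    have : 0 < Nat.card (commutator G) := Nat.card_pos
    interval_cases Nat.card (commutator G) <;> norm_num
  obtain hZ | hZ := le_or_gt (Subgroup.center G).index 4
  · exact isCyclic_of_card_le_two (card_commutator_le_two_of_index_center_le_four hZ)
  by_cases hle : commutator G ≤ Subgroup.center G
  · exact isCyclic_of_card_le_two ((Subgroup.card_le_of_le hle).trans_eq
      (card_center_eq_two hG h hZ).1)
  obtain ⟨e, he, e_notMem⟩ := SetLike.not_le_iff_exists.1 hle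
  obtain ⟨A, index_A, _⟩ := exists_isMulCommutative_index_eq_two hG h hZ
  have e_sq : e ^ 2 ≠ 1 := by
    intro e_sq
    refine e_notMem (Subgroup.mem_center_iff.2 fun g => ?_)
    by_cases hg : g ∈ A
    · exact setLike_mul_comm hg (commutator_le_of_index_eq_two index_A he)
    · rw [← mul_inv_eq_iff_eq_mul, conj_eq_inv_of_mem_commutator index_A hg he,
        inv_eq_of_mul_eq_one_left (sq e ▸ e_sq)]
  let e' : commutator G := ⟨e, he⟩
  refine isCyclic_of_card_le_orderOf e' ?_
  obtain ⟨k, hk⟩ := orderOf_dvd_natCard e'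
  have k_pos : 0 < k := Nat.pos_of_mul_pos_left (hk ▸ Nat.card_pos)
  have two_lt : 2 < orderOf e' := by
    refine lt_of_not_ge fun hle_two => e_sq ?_
    have pos := orderOf_pos e'
    have : orderOf e' ∣ 2 := by interval_cases orderOf e' <;> norm_num
    exact congrArg Subtype.val (orderOf_dvd_iff_pow_eq_one.1 this)
  have card_le := card_commutator_le_four hG h hZ
  obtain rfl : k = 1 := by nlinarith
  exact (hk.trans (mul_one _)).le

end

/-! ### The centralizer of the commutator subgroup -/

section

open scoped commutatorElement

variable {G : Type*} [Group G]

lemma normal_zpowers_of_forall_commutatorElement_mem {y : G}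
    (hy : ∀ g : G, ⁅g, y⁆ ∈ Subgroup.zpowers y) : (Subgroup.zpowers y).Normal := by
  refine ⟨fun x hx g => ?_⟩
  obtain ⟨n, rfl⟩ := Subgroup.mem_zpowers_iff.1 hx
  have conj_eq : g * y * g⁻¹ = ⁅g, y⁆ * y := by group
  rw [← conj_zpow, conj_eq]
  exact Subgroup.zpow_mem _ (Subgroup.mul_mem _ (hy g) (Subgroup.mem_zpowers y)) n

lemma not_normal_zpowers {y : G} (hy : y ∉ Subgroup.centralizer (commutator G : Set G)) :
    ¬ (Subgroup.zpowers y).Normal := fun _ =>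
  hy (Subgroup.le_centralizer_iff.1 (commutator_le_centralizer_of_isCyclic _)
    (Subgroup.mem_zpowers y))

variable [Finite G]

lemma isMulCommutative_commutator_of_odd {p : ℕ} [Fact p.Prime] (hp : p ≠ 2) {H : Subgroup G}
    (hH : IsPGroup p H) [IsMulCommutative H] (hn : ¬ H.Normal) (h : 4 / 81 < tp G) :
    IsMulCommutative (commutator G) := by
  obtain ⟨normalizer_eq, index_eq⟩ | ⟨index_eq, relIndex_eq⟩ := index_normalizer_of_odd hp hH hn h
  · have not_dvd : ¬ p ∣ H.index := by
      rw [index_eq]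
      exact fun hdvd => hp ((Nat.prime_dvd_prime_iff_eq Fact.out Nat.prime_two).1
        (Nat.Prime.dvd_of_dvd_pow Fact.out (n := 2) hdvd))
    have : IsMulCommutative (hH.toSylow not_dvd) := ‹IsMulCommutative H›
    exact isMulCommutative_commutator_of_sylow (hH.toSylow not_dvd) normalizer_eq (q := 2) index_eq
  · exact isMulCommutative_commutator_of_index_normalizer_eq_two (p := 3) index_eq relIndex_eq

lemma isPGroup_quotient_of_forall_mem {p : ℕ} (hp : p ≠ 0) {N : Subgroup G} [N.Normal]
    (hN : ∀ q : ℕ, q.Prime → ¬ q ∣ p → ∀ g : G, IsPGroup q (Subgroup.zpowers g) → g ∈ N) :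
    IsPGroup p (G ⧸ N) := by
  refine (isPGroup_iff_primeFactors_card_subset hp).2 fun q hq => ?_
  obtain ⟨q_prime, q_dvd, -⟩ := Nat.mem_primeFactors.1 hq
  have := Fact.mk q_prime
  refine Nat.mem_primeFactors.2 ⟨q_prime, not_not.1 fun not_dvd => ?_, hp⟩
  let Q : Sylow q G := default
  have Q_le : (Q : Subgroup G) ≤ N := fun g hg =>
    hN q q_prime not_dvd g (Q.isPGroup'.to_le (Subgroup.zpowers_le.2 hg))
  exact Q.not_dvd_index (q_dvd.trans (Subgroup.index_dvd_of_le Q_le))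

lemma exists_mem_center_orderOf_eq [Nontrivial G] {p : ℕ} [Fact p.Prime] (hG : IsPGroup p G) :
    ∃ z ∈ Subgroup.center G, orderOf z = p := by
  obtain ⟨n, n_pos, card_eq⟩ :=
    (hG.to_subgroup (Subgroup.center G)).nontrivial_iff_card.1 hG.center_nontrivial
  obtain ⟨z, hz⟩ := exists_prime_orderOf_dvd_card' p (card_eq ▸ dvd_pow_self p n_pos.ne')
  exact ⟨z, z.2, (Subgroup.orderOf_coe z).trans hz⟩

lemma index_le_index_zpowers {C : Subgroup G} {y : G} (hy : y ^ 2 ∈ C)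
    (hC : ∀ g : G, ⁅g, y⁆ ∈ C) (hn : ¬ (Subgroup.zpowers y).Normal) :
    C.index ≤ (Subgroup.zpowers y).index := by
  have sq_le : Subgroup.zpowers (y ^ 2) ≤ Subgroup.zpowers y :=
    Subgroup.zpowers_le.2 (Subgroup.npow_mem_zpowers y 2)
  have one_lt : 1 < (Subgroup.zpowers (y ^ 2)).relIndex C := one_lt_relIndex fun hle =>
    hn (normal_zpowers_of_forall_commutatorElement_mem fun g => sq_le (hle (hC g)))
  have orderOf_le : orderOf y ≤ 2 * orderOf (y ^ 2) := by
    refine orderOf_le_of_pow_eq_one (Nat.mul_pos two_pos (orderOf_pos _)) ?_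
    rw [pow_mul, pow_orderOf_eq_one]
  have card_le : Nat.card (Subgroup.zpowers y) ≤ Nat.card C := by
    rw [← Subgroup.relIndex_bot_left C,
      ← Subgroup.relIndex_mul_relIndex ⊥ _ C bot_le (Subgroup.zpowers_le.2 hy),
      Subgroup.relIndex_bot_left, Nat.card_zpowers, Nat.card_zpowers]
    nlinarith
  refine Nat.le_of_mul_le_mul_left (c := Nat.card C) ?_ Nat.card_pos
  rw [C.card_mul_index, ← (Subgroup.zpowers y).card_mul_index]
  exact Nat.mul_le_mul_right _ card_le

section NotCommutative

variable (h : 4 / 81 < tp G) (hG : ¬ IsMulCommutative (commutator G))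
include h hG

lemma isPGroup_quotient_centralizer_commutator :
    IsPGroup 2 (G ⧸ Subgroup.centralizer (commutator G : Set G)) := by
  refine isPGroup_quotient_of_forall_mem two_ne_zero fun q hq q_ndvd g hg => ?_
  have := Fact.mk hq
  have q_ne : q ≠ 2 := fun q_eq => q_ndvd q_eq.dvd
  by_contra g_notMem
  exact hG (isMulCommutative_commutator_of_odd q_ne hg (not_normal_zpowers g_notMem) h)

lemma card_quotient_centralizer_commutator_le_sixteen :
    Nat.card (G ⧸ Subgroup.centralizer (commutator G : Set G)) ≤ 16 := by
  let C := Subgroup.centralizer (commutator G : Set G)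
  have index_ne_one : C.index ≠ 1 := fun h_one => hG <|
    Subgroup.le_centralizer_iff_isMulCommutative.1
      (le_top.trans_eq (Subgroup.index_eq_one.1 h_one).symm)
  have : Nontrivial (G ⧸ C) :=
    Finite.one_lt_card_iff_nontrivial.1 (Nat.one_lt_iff_ne_zero_and_ne_one.2
      ⟨Subgroup.index_ne_zero_of_finite, index_ne_one⟩)
  obtain ⟨z, z_central, z_order⟩ :=
    exists_mem_center_orderOf_eq (isPGroup_quotient_centralizer_commutator h hG)
  obtain ⟨y, rfl⟩ := QuotientGroup.mk_surjective z
  have y_notMem : y ∉ C := by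
    intro hy
    rw [(QuotientGroup.eq_one_iff y).2 hy, orderOf_one] at z_order
    lia
  have y_sq : y ^ 2 ∈ C := by
    rw [← QuotientGroup.eq_one_iff, QuotientGroup.mk_pow, ← z_order, pow_orderOf_eq_one]
  have hn := not_normal_zpowers y_notMem
  exact (index_le_index_zpowers y_sq (mk_mem_center_iff.1 z_central) hn).trans
    (index_le_sixteen h hn)

end NotCommutative

lemma isMulCommutative_commutator (h : 4 / 81 < tp G) : IsMulCommutative (commutator G) := by
  by_contra hG
  let C := Subgroup.centralizer (commutator G : Set G)
  have : IsCyclic (commutator (G ⧸ C)) :=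
    isCyclic_commutator_of_card_le_sixteen (isPGroup_quotient_centralizer_commutator h hG)
      (card_quotient_centralizer_commutator_le_sixteen h hG)
  let f : commutator G →* commutator (G ⧸ C) :=
    ((QuotientGroup.mk' C).comp (commutator G).subtype).codRestrict _ fun x =>
      (map_commutator_of_surjective (QuotientGroup.mk'_surjective C)).le
        (Subgroup.mem_map_of_mem _ x.2)
  refine hG (f.isMulCommutative_of_isCyclic_of_ker_le_center fun x hx => ?_)
  have x_mem : (x : G) ∈ C := (QuotientGroup.eq_one_iff _).1 (congrArg Subtype.val hx)
  exact Subgroup.mem_center_iff.2 fun y => Subtype.ext (x_mem y y.2)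

end

theorem stmt19 (G : Type*) [Group G] [Finite G]
    (hna : ¬ ∀ a b : G, a * b = b * a) (h : tp G > (4 / 81 : ℚ)) :
    commutator G ≠ ⊥ ∧
      ∀ a b : G, a ∈ commutator G → b ∈ commutator G → a * b = b * a := by
  refine ⟨fun h_bot => hna ?_, fun a b ha hb => ?_⟩
  · exact isMulCommutative_iff.1 ((commutator_eq_bot_iff G).1 h_bot)
  · have := isMulCommutative_commutator h
    exact setLike_mul_comm ha hb
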